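/- Let n ≥ 1 and let K ⊂ ℝⁿ be a convex body containing the origin in its interior with G_K = G_{K°} = 0. Then F_K is twice differentiable at (0,0) and its Hessian at (0,0) is given by the quadratic form Hess_{(0,0)}F_K[(v,η),(v,η)] = (n+1)·vp(K)·[ (n+2)·vᵗ cov(K°) v + (n+2)·ηᵗ cov(K) η − 2⟨v,η⟩ ] for all (v,η) ∈ ℝⁿ × ℝⁿ; equivalently, in block form the Hessian matrix equals (n+1)·vp(K) times the 2n×2n block matrix with diagonal blocks (n+2)·cov(K°) and (n+2)·cov(K) and off-diagonal blocks −I_n. -/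

import Mathlib

open MeasureTheory RealInnerProductSpace

noncomputable section

/-- The polar body `K° = {y | ⟨x, y⟩ ≤ 1 for all x ∈ K}`. -/
def polarBody {n : ℕ} (K : Set (EuclideanSpace ℝ (Fin n))) : Set (EuclideanSpace ℝ (Fin n)) :=
  {y | ∀ x ∈ K, ⟪x, y⟫ ≤ 1}

/-- The volume product `vp(K) = |K| · |K°|`. -/
def vp {n : ℕ} (K : Set (EuclideanSpace ℝ (Fin n))) : ℝ :=
  (volume K).toReal * (volume (polarBody K)).toReal

/-- The barycenter `G_A = |A|⁻¹ ∫_A x dx`. -/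
def bary {n : ℕ} (A : Set (EuclideanSpace ℝ (Fin n))) : EuclideanSpace ℝ (Fin n) :=
  (volume A).toReal⁻¹ • ∫ x in A, x

/-- The covariance matrix `cov(K)_{ij} = |K|⁻¹ ∫_K x_i x_j dx`. -/
def covM {n : ℕ} (K : Set (EuclideanSpace ℝ (Fin n))) : Matrix (Fin n) (Fin n) ℝ :=
  Matrix.of fun i j => (volume K).toReal⁻¹ * ∫ x in K, x i * x j

/-- The functional `F_K(x, ξ) = vp((K° + ξ)° + x)`. -/
def FK {n : ℕ} (K : Set (EuclideanSpace ℝ (Fin n)))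
    (p : EuclideanSpace ℝ (Fin n) × EuclideanSpace ℝ (Fin n)) : ℝ :=
  vp ((fun y => y + p.1) '' polarBody ((fun y => y + p.2) '' polarBody K))

/-!
The polar of a translate `A + ξ` is the image of `A°` under the fractional linear map
`z ↦ z / (1 + ⟪ξ, z⟫)`, whose Jacobian determinant is `(1 + ⟪ξ, z⟫) ^ (-(n + 1))`: the derivative
is a scalar multiple of a transvection. Applying this to `K° + ξ` and, by the bipolar theorem, to
`(K° + ξ)° + x` gives, for `(x, ξ)` near `0`,
`F_K (x, ξ) = ∫_K (1 + ⟪ξ, z⟫) ^ (-(n + 1)) dz * ∫_{K°} (1 + ⟪x, y⟫ + ⟪x, ξ⟫) ^ (-(n + 1)) dy`.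
Both factors may be differentiated twice under the integral sign. Their gradients at `0` are first
moments, so the product rule contributes a cross term in the two barycenters, and their Hessians
are second moments about the origin, together with the mixed term coming from `⟪x, ξ⟫`.
-/

open Filter Module ProbabilityTheory Set Topology

section Polar

variable {n : ℕ} {A : Set (EuclideanSpace ℝ (Fin n))} {x y : EuclideanSpace ℝ (Fin n)}

theorem isClosed_polarBody (A : Set (EuclideanSpace ℝ (Fin n))) : IsClosed (polarBody A) := by
  simp only [polarBody, ofPred_forall]
  exact isClosed_biInter fun x _ => isClosed_le (by fun_prop) continuous_const

theorem convex_polarBody (A : Set (EuclideanSpace ℝ (Fin n))) : Convex ℝ (polarBody A) := by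
  simp only [polarBody, ofPred_forall]
  exact convex_iInter₂ fun x _ => convex_halfSpace_le (innerSL ℝ x).isLinear 1

theorem isCompact_polarBody (hA : 0 ∈ interior A) : IsCompact (polarBody A) := by
  obtain ⟨r, hr, hrA⟩ :=
    Metric.nhds_basis_closedBall.mem_iff.1 (mem_interior_iff_mem_nhds.1 hA)
  refine (isCompact_closedBall (0 : EuclideanSpace ℝ (Fin n)) r⁻¹).of_isClosed_subset
    (isClosed_polarBody A) fun y hy => ?_
  rw [mem_closedBall_zero_iff]
  rcases eq_or_ne y 0 with rfl | hy0
  · simpa using hr.le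
  have hnorm : 0 < ‖y‖ := norm_pos_iff.2 hy0
  have hmem : (r / ‖y‖) • y ∈ A := hrA <| by
    rw [mem_closedBall_zero_iff, norm_smul, Real.norm_of_nonneg (by positivity),
      div_mul_cancel₀ _ hnorm.ne']
  rw [← one_div, le_div_iff₀' hr]
  calc r * ‖y‖ = ⟪(r / ‖y‖) • y, y⟫ := by
        rw [real_inner_smul_left, real_inner_self_eq_norm_sq]
        field_simp
    _ ≤ 1 := hy _ hmem

theorem subset_polarBody_polarBody (A : Set (EuclideanSpace ℝ (Fin n))) :
    A ⊆ polarBody (polarBody A) := fun a ha y hy => by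
  rw [real_inner_comm]
  exact hy a ha

theorem polarBody_polarBody (hclosed : IsClosed A) (hconv : Convex ℝ A) (h0 : 0 ∈ A) :
    polarBody (polarBody A) = A := by
  refine Subset.antisymm (fun y hy => ?_) (subset_polarBody_polarBody A)
  by_contra hyA
  obtain ⟨f, u, hfu, huy⟩ := geometric_hahn_banach_closed_point hconv hclosed hyA
  have hu : 0 < u := by simpa using hfu 0 h0
  obtain ⟨w, rfl⟩ := (InnerProductSpace.toDual ℝ (EuclideanSpace ℝ (Fin n))).surjective f
  simp only [InnerProductSpace.toDual_apply_apply] at hfu huy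
  have hw : u⁻¹ • w ∈ polarBody A := fun a ha => by
    rw [real_inner_smul_right, real_inner_comm, inv_mul_le_iff₀ hu, mul_one]
    exact (hfu a ha).le
  have hwy : ⟪w, y⟫ ≤ u := by
    simpa [real_inner_smul_left, inv_mul_le_iff₀ hu] using hy _ hw
  exact huy.not_ge hwy

theorem inner_lt_one_of_mem_interior (hx : x ∈ interior A) (hy : y ∈ polarBody A) :
    ⟪x, y⟫ < 1 := by
  rcases eq_or_ne y 0 with rfl | hy0
  · simp
  have hopen : IsOpenMap (innerSL ℝ y) :=
    (innerSL ℝ y).isOpenMap_of_ne_zero fun h => hy0 <| by simpa using congr($h y)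
  have hsub : innerSL ℝ y '' A ⊆ Iic 1 := by
    rintro _ ⟨a, ha, rfl⟩
    simpa [real_inner_comm] using hy a ha
  have hmem := interior_mono hsub (hopen.image_interior_subset A (mem_image_of_mem _ hx))
  simpa [real_inner_comm] using hmem

theorem mem_interior_polarBody_iff (hA : IsCompact A) :
    y ∈ interior (polarBody A) ↔ ∀ x ∈ A, ⟪x, y⟫ < 1 := by
  refine ⟨fun hy x hx => ?_, fun h => ?_⟩
  · rw [real_inner_comm]
    exact inner_lt_one_of_mem_interior hy (subset_polarBody_polarBody A hx)
  · rw [mem_interior_iff_mem_nhds]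
    have hnear : ∀ᶠ z in 𝓝 y, ∀ x ∈ A, ⟪x, z⟫ < 1 :=
      hA.eventually_forall_of_forall_eventually fun x hx =>
        (Continuous.tendsto (by fun_prop) _).eventually_lt_const (h x hx)
    filter_upwards [hnear] with z hz x hx using (hz x hx).le

theorem zero_mem_interior_polarBody (hA : IsCompact A) : 0 ∈ interior (polarBody A) :=
  (mem_interior_polarBody_iff hA).2 fun x _ => by simp

end Polar

section PolarShift

variable {E : Type*} [NormedAddCommGroup E] [InnerProductSpace ℝ E] {ξ z : E}

/-- The fractional linear map `z ↦ z / (1 + ⟪ξ, z⟫)`, which carries the polar of a body `A` onto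
the polar of the translate `A + ξ`. -/
def polarShift (ξ z : E) : E := (1 + ⟪ξ, z⟫)⁻¹ • z

theorem one_add_inner_neg_polarShift (h : 1 + ⟪ξ, z⟫ ≠ 0) :
    1 + ⟪-ξ, polarShift ξ z⟫ = (1 + ⟪ξ, z⟫)⁻¹ := by
  rw [polarShift, inner_neg_left, real_inner_smul_right]
  field_simp
  ring

theorem polarShift_neg_polarShift (h : 1 + ⟪ξ, z⟫ ≠ 0) :
    polarShift (-ξ) (polarShift ξ z) = z := by
  rw [polarShift, one_add_inner_neg_polarShift h, inv_inv, polarShift, smul_inv_smul₀ h]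

theorem hasFDerivAt_polarShift (h : 1 + ⟪ξ, z⟫ ≠ 0) :
    HasFDerivAt (polarShift ξ) ((1 + ⟪ξ, z⟫)⁻¹ •
      (.id ℝ E - (1 + ⟪ξ, z⟫)⁻¹ • (innerSL ℝ ξ).smulRight z)) z := by
  have hden : HasFDerivAt (fun z => 1 + ⟪ξ, z⟫) (innerSL ℝ ξ) z :=
    (innerSL ℝ ξ).hasFDerivAt.const_add 1
  refine (((hasDerivAt_inv h).comp_hasFDerivAt z hden).smul (hasFDerivAt_id z)).congr_fderiv ?_
  ext w
  simp [smul_smul, smul_sub, pow_two, mul_assoc, ← sub_eq_add_neg]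

variable [FiniteDimensional ℝ E]

theorem det_fderiv_polarShift (h : 1 + ⟪ξ, z⟫ ≠ 0) :
    ((1 + ⟪ξ, z⟫)⁻¹ • (.id ℝ E - (1 + ⟪ξ, z⟫)⁻¹ • (innerSL ℝ ξ).smulRight z) : E →L[ℝ] E).det =
      (1 + ⟪ξ, z⟫) ^ (-(finrank ℝ E + 1) : ℤ) := by
  have htrans : (((1 + ⟪ξ, z⟫)⁻¹ • (.id ℝ E - (1 + ⟪ξ, z⟫)⁻¹ • (innerSL ℝ ξ).smulRight z) :
      E →L[ℝ] E) : E →ₗ[ℝ] E) = (1 + ⟪ξ, z⟫)⁻¹ •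
        LinearMap.transvection (-(1 + ⟪ξ, z⟫)⁻¹ • (innerSL ℝ ξ : E →ₗ[ℝ] ℝ)) z := by
    ext w
    simp [LinearMap.transvection.apply, smul_sub, mul_smul, ← sub_eq_add_neg]
  have hfactor : 1 + (-(1 + ⟪ξ, z⟫)⁻¹ • (innerSL ℝ ξ : E →ₗ[ℝ] ℝ)) z = (1 + ⟪ξ, z⟫)⁻¹ := by
    simp only [ContinuousLinearMap.toLinearMap_innerSL_apply, LinearMap.smul_apply,
      innerₛₗ_apply_apply, smul_eq_mul]
    field_simp
    ring
  rw [ContinuousLinearMap.det, htrans, LinearMap.det_smul, LinearMap.transvection.det, hfactor,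
    ← pow_succ, zpow_neg, inv_pow]
  norm_cast

theorem measureReal_image_polarShift [MeasurableSpace E] [BorelSpace E] (μ : Measure E)
    [μ.IsAddHaarMeasure] {S : Set E} (hS : MeasurableSet S) (hpos : ∀ z ∈ S, 0 < 1 + ⟪ξ, z⟫) :
    μ.real (polarShift ξ '' S) = ∫ z in S, (1 + ⟪ξ, z⟫) ^ (-(finrank ℝ E + 1) : ℤ) ∂μ := by
  have hinj : InjOn (polarShift ξ) S :=
    LeftInvOn.injOn (f₁' := polarShift (-ξ)) fun z hz =>
      polarShift_neg_polarShift (hpos z hz).ne'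
  calc μ.real (polarShift ξ '' S) = ∫ _ in polarShift ξ '' S, (1 : ℝ) ∂μ := by simp
    _ = _ := integral_image_eq_integral_abs_det_fderiv_smul μ hS
      (fun z hz => (hasFDerivAt_polarShift (hpos z hz).ne').hasFDerivWithinAt) hinj _
    _ = _ := setIntegral_congr_fun hS fun z hz => by
      have := hpos z hz
      simp only [det_fderiv_polarShift this.ne', smul_eq_mul, mul_one]
      exact abs_of_pos (by positivity)

end PolarShift

section PolarTranslate

variable {n : ℕ} {A K : Set (EuclideanSpace ℝ (Fin n))} {ξ z : EuclideanSpace ℝ (Fin n)}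

theorem zero_lt_one_add_inner_of_neg_mem_interior (hξ : -ξ ∈ interior A) (hz : z ∈ polarBody A) :
    0 < 1 + ⟪ξ, z⟫ := by
  have := inner_lt_one_of_mem_interior hξ hz
  rw [inner_neg_left] at this
  linarith

theorem polarShift_mem_polarBody (hz : z ∈ polarBody A) (hpos : 0 < 1 + ⟪ξ, z⟫) :
    polarShift ξ z ∈ polarBody ((fun a => a + ξ) '' A) := by
  rintro _ ⟨a, ha, rfl⟩
  rw [polarShift, real_inner_smul_right, inv_mul_le_iff₀ hpos, mul_one, inner_add_left]
  linarith [hz a ha]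

theorem polarBody_image_add_right (h0 : 0 ∈ interior A) (hξ : -ξ ∈ interior A) :
    polarBody ((fun a => a + ξ) '' A) = polarShift ξ '' polarBody A := by
  refine Subset.antisymm (fun y hy => ?_) (image_subset_iff.2 fun z hz =>
    polarShift_mem_polarBody hz (zero_lt_one_add_inner_of_neg_mem_interior hξ hz))
  have hξ' : - -ξ ∈ interior ((fun a => a + ξ) '' A) := by
    rw [neg_neg]
    simpa using (Homeomorph.addRight ξ).isOpenMap.image_interior_subset A (mem_image_of_mem _ h0)
  have hpos := zero_lt_one_add_inner_of_neg_mem_interior hξ' hy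
  have hmem := polarShift_mem_polarBody hy hpos
  rw [image_image] at hmem
  refine ⟨polarShift (-ξ) y, by simpa using hmem, ?_⟩
  simpa using polarShift_neg_polarShift hpos.ne'

theorem measureReal_polarBody_image_add_right (h0 : 0 ∈ interior A) (hξ : -ξ ∈ interior A) :
    volume.real (polarBody ((fun a => a + ξ) '' A)) =
      ∫ z in polarBody A, (1 + ⟪ξ, z⟫) ^ (-(n + 1) : ℤ) := by
  rw [polarBody_image_add_right h0 hξ, measureReal_image_polarShift volume
    (isClosed_polarBody A).measurableSet
    fun z hz => zero_lt_one_add_inner_of_neg_mem_interior hξ hz, finrank_euclideanSpace_fin]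

theorem FK_eq_mul_setIntegral (hKcomp : IsCompact K) (hKconv : Convex ℝ K) (hK0 : 0 ∈ interior K)
    {p : EuclideanSpace ℝ (Fin n) × EuclideanSpace ℝ (Fin n)}
    (hξ : -p.2 ∈ interior (polarBody K))
    (hx : -p.1 ∈ interior (polarBody ((fun y => y + p.2) '' polarBody K))) :
    FK K p = (∫ z in K, (1 + ⟪p.2, z⟫) ^ (-(n + 1) : ℤ)) *
      ∫ y in polarBody K, (1 + ⟪p.1, y⟫ + ⟪p.1, p.2⟫) ^ (-(n + 1) : ℤ) := by
  obtain ⟨x, ξ⟩ := p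
  set L := (fun y => y + ξ) '' polarBody K with hL
  have hLcomp : IsCompact L := (isCompact_polarBody hK0).image (by fun_prop)
  have hLconv : Convex ℝ L := by
    simpa only [hL, add_comm ξ] using (convex_polarBody K).translate ξ
  have hL0 : 0 ∈ L := ⟨-ξ, interior_subset hξ, neg_add_cancel ξ⟩
  have hleft : volume.real ((fun y => y + x) '' polarBody L) =
      ∫ z in K, (1 + ⟪ξ, z⟫) ^ (-(n + 1) : ℤ) := by
    rw [image_add_right, measureReal_def, measure_preimage_add_right, ← measureReal_def,
      measureReal_polarBody_image_add_right (zero_mem_interior_polarBody hKcomp) hξ,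
      polarBody_polarBody hKcomp.isClosed hKconv (interior_subset hK0)]
  have hright : volume.real (polarBody ((fun y => y + x) '' polarBody L)) =
      ∫ y in polarBody K, (1 + ⟪x, y⟫ + ⟪x, ξ⟫) ^ (-(n + 1) : ℤ) := by
    rw [measureReal_polarBody_image_add_right (zero_mem_interior_polarBody hLcomp) hx,
      polarBody_polarBody hLcomp.isClosed hLconv hL0, hL,
      (measurePreserving_add_right volume ξ).setIntegral_image_emb
        (measurableEmbedding_addRight ξ)]
    simp only [inner_add_right, add_assoc]
  exact congr_arg₂ (· * ·) hleft hright

theorem FK_eventuallyEq_mul_setIntegral (hKcomp : IsCompact K) (hKconv : Convex ℝ K)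
    (hK0 : 0 ∈ interior K) :
    FK K =ᶠ[𝓝 0] fun p => (∫ z in K, (1 + ⟪p.2, z⟫) ^ (-(n + 1) : ℤ)) *
      ∫ y in polarBody K, (1 + ⟪p.1, y⟫ + ⟪p.1, p.2⟫) ^ (-(n + 1) : ℤ) := by
  have hPcomp : IsCompact (polarBody K) := isCompact_polarBody hK0
  have hξ : ∀ᶠ p : EuclideanSpace ℝ (Fin n) × EuclideanSpace ℝ (Fin n) in 𝓝 0,
      -p.2 ∈ interior (polarBody K) := by
    refine ContinuousAt.eventually_mem (by fun_prop) (isOpen_interior.mem_nhds ?_)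
    simpa using zero_mem_interior_polarBody hKcomp
  have hx : ∀ᶠ p : EuclideanSpace ℝ (Fin n) × EuclideanSpace ℝ (Fin n) in 𝓝 0,
      ∀ y ∈ polarBody K, ⟪y + p.2, -p.1⟫ < 1 :=
    hPcomp.eventually_forall_of_forall_eventually fun y _ =>
      (Continuous.tendsto (by fun_prop) _).eventually_lt_const (by simp)
  filter_upwards [hξ, hx] with p hpξ hpx
  refine FK_eq_mul_setIntegral hKcomp hKconv hK0 hpξ ?_
  rwa [mem_interior_polarBody_iff (hPcomp.image (by fun_prop)), forall_mem_image]

end PolarTranslate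

section SecondDerivative

variable {𝕜 E F : Type*} [NontriviallyNormedField 𝕜] [NormedAddCommGroup E] [NormedSpace 𝕜 E]
  [NormedAddCommGroup F] [NormedSpace 𝕜 F]

/-- `f` is twice differentiable at `x`, with first derivative `f'` and second derivative `f''`
there. -/
def HasSecondFDerivAt (f : E → F) (f' : E →L[𝕜] F) (f'' : E →L[𝕜] E →L[𝕜] F) (x : E) : Prop :=
  ∃ D : E → E →L[𝕜] F, (∀ᶠ y in 𝓝 x, HasFDerivAt f (D y) y) ∧ HasFDerivAt D f'' x ∧ D x = f'

theorem HasSecondFDerivAt.congr_of_eventuallyEq {f g : E → F} {f' : E →L[𝕜] F}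
    {f'' : E →L[𝕜] E →L[𝕜] F} {x : E} (hf : HasSecondFDerivAt f f' f'' x) (hgf : g =ᶠ[𝓝 x] f) :
    HasSecondFDerivAt g f' f'' x := by
  obtain ⟨D, hD, hD', hDx⟩ := hf
  refine ⟨D, ?_, hD', hDx⟩
  filter_upwards [hD, hgf.eventually_nhds] with y hy hgfy using hy.congr_of_eventuallyEq hgfy

theorem HasSecondFDerivAt.mul {f g : E → 𝕜} {f' g' : E →L[𝕜] 𝕜} {f'' g'' : E →L[𝕜] E →L[𝕜] 𝕜}
    {x : E} (hf : HasSecondFDerivAt f f' f'' x) (hg : HasSecondFDerivAt g g' g'' x) :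
    HasSecondFDerivAt (fun y => f y * g y) (f x • g' + g x • f')
      (f x • g'' + f'.smulRight g' + (g x • f'' + g'.smulRight f')) x := by
  obtain ⟨Df, hDf, hDf', rfl⟩ := hf
  obtain ⟨Dg, hDg, hDg', rfl⟩ := hg
  refine ⟨fun y => f y • Dg y + g y • Df y, ?_, ?_, rfl⟩
  · filter_upwards [hDf, hDg] with y hfy hgy using hfy.mul hgy
  · exact (hDf.self_of_nhds.smul hDg').add (hDg.self_of_nhds.smul hDf')

theorem hasFDerivAt_zpow_comp {f : E → 𝕜} {f' : E →L[𝕜] 𝕜} {x : E} (hf : HasFDerivAt f f' x)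
    (hx : f x ≠ 0) (m : ℤ) :
    HasFDerivAt (fun y => f y ^ m) ((m * f x ^ (m - 1)) • f') x :=
  (hasDerivAt_zpow m (f x) (.inl hx)).comp_hasFDerivAt (f := f) x hf

end SecondDerivative

section ParametricIntegral

variable {P E G : Type*} [NormedAddCommGroup P] [NormedSpace ℝ P] [ProperSpace P]
  [NormedAddCommGroup E] [MeasurableSpace E] [BorelSpace E]
  [NormedAddCommGroup G] [NormedSpace ℝ G] {μ : Measure E} [IsFiniteMeasureOnCompacts μ]
  {S : Set E} {U : Set P} {p : P}

theorem hasFDerivAt_setIntegral_of_isCompact {φ : P → E → G} {φ' : P → E → P →L[ℝ] G}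
    (hS : IsCompact S) (hU : U ∈ 𝓝 p) (hφ : ContinuousOn ↿φ (U ×ˢ S))
    (hφ' : ContinuousOn ↿φ' (U ×ˢ S))
    (hderiv : ∀ q ∈ U, ∀ z ∈ S, HasFDerivAt (φ · z) (φ' q z) q) :
    HasFDerivAt (fun q => ∫ z in S, φ q z ∂μ) (∫ z in S, φ' p z ∂μ) p := by
  obtain ⟨r, hr, hrU⟩ := Metric.nhds_basis_closedBall.mem_iff.1 hU
  obtain ⟨C, hC⟩ := ((isCompact_closedBall p r).prod hS).exists_bound_of_continuousOn
    (hφ'.mono (prod_mono_left hrU))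
  have hφ_int : ∀ q ∈ U, IntegrableOn (φ q) S μ := fun q hq =>
    (hφ.uncurry_left q hq).integrableOn_compact hS
  have hφ'_int : IntegrableOn (φ' p) S μ :=
    (hφ'.uncurry_left p (mem_of_mem_nhds hU)).integrableOn_compact hS
  refine hasFDerivAt_integral_of_dominated_of_fderiv_le (bound := fun _ => C)
    (Metric.closedBall_mem_nhds p hr) ?_ (hφ_int p (mem_of_mem_nhds hU))
    hφ'_int.aestronglyMeasurable ?_ (integrableOn_const hS.measure_ne_top) ?_
  · filter_upwards [hU] with q hq using (hφ_int q hq).aestronglyMeasurable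
  · exact ae_restrict_of_forall_mem hS.measurableSet fun z hz q hq => hC (q, z) ⟨hq, hz⟩
  · exact ae_restrict_of_forall_mem hS.measurableSet fun z hz q hq => hderiv q (hrU hq) z hz

set_option maxSynthPendingDepth 5 in
theorem hasSecondFDerivAt_setIntegral_zpow [SecondCountableTopology E] {s : P → E → ℝ}
    {s' : P → E → P →L[ℝ] ℝ} {s'' : P → E → P →L[ℝ] P →L[ℝ] ℝ} (hS : IsCompact S) (m : ℤ)
    (hs : Continuous ↿s) (hs' : Continuous ↿s') (hs'' : Continuous ↿s'')
    (hderiv : ∀ q z, HasFDerivAt (s · z) (s' q z) q)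
    (hderiv' : ∀ q z, HasFDerivAt (s' · z) (s'' q z) q) (hne : ∀ z ∈ S, s p z ≠ 0) :
    HasSecondFDerivAt (fun q => ∫ z in S, s q z ^ m ∂μ)
      (∫ z in S, (m * s p z ^ (m - 1)) • s' p z ∂μ)
      (∫ z in S, ((m * s p z ^ (m - 1)) • s'' p z +
        (m * (m - 1) * s p z ^ (m - 2)) • (s' p z).smulRight (s' p z)) ∂μ) p := by
  obtain ⟨U, hUne, hUopen, hpU⟩ : ∃ U ⊆ {q | ∀ z ∈ S, s q z ≠ 0}, IsOpen U ∧ p ∈ U :=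
    mem_nhds_iff.1 <| hS.eventually_forall_of_forall_eventually fun z hz =>
      hs.continuousAt.eventually_ne (hne z hz)
  have hpow (k : ℤ) : ContinuousOn (fun q : P × E => s q.1 q.2 ^ k) (U ×ˢ S) :=
    hs.continuousOn.zpow₀ k fun q hq => .inl (hUne hq.1 q.2 hq.2)
  have hφ' : ContinuousOn (fun q : P × E => (m * s q.1 q.2 ^ (m - 1)) • s' q.1 q.2) (U ×ˢ S) :=
    (continuousOn_const.mul (hpow _)).smul hs'.continuousOn
  have hsmulRight : Continuous fun q : P × E => (s' q.1 q.2).smulRight (s' q.1 q.2) :=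
    (ContinuousLinearMap.smulRightL ℝ P (P →L[ℝ] ℝ)).continuous₂.comp (hs'.prodMk hs')
  have hφ'' : ContinuousOn (fun q : P × E => (m * s q.1 q.2 ^ (m - 1)) • s'' q.1 q.2 +
      (m * (m - 1) * s q.1 q.2 ^ (m - 2)) • (s' q.1 q.2).smulRight (s' q.1 q.2)) (U ×ˢ S) :=
    ((continuousOn_const.mul (hpow _)).smul hs''.continuousOn).add
      ((continuousOn_const.mul (hpow _)).smul hsmulRight.continuousOn)
  refine ⟨fun q => ∫ z in S, (m * s q z ^ (m - 1)) • s' q z ∂μ, ?_, ?_, rfl⟩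
  · filter_upwards [hUopen.mem_nhds hpU] with q hq
    exact hasFDerivAt_setIntegral_of_isCompact hS (hUopen.mem_nhds hq) (hpow m) hφ'
      fun q hq z hz => hasFDerivAt_zpow_comp (hderiv q z) (hUne hq z hz) m
  · refine hasFDerivAt_setIntegral_of_isCompact
      (φ' := fun q z => (m * s q z ^ (m - 1)) • s'' q z +
        (m * (m - 1) * s q z ^ (m - 2)) • (s' q z).smulRight (s' q z))
      hS (hUopen.mem_nhds hpU) hφ' hφ'' fun q hq z hz => ?_
    refine (((hasFDerivAt_zpow_comp (hderiv q z) (hUne hq z hz) (m - 1)).const_mul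
      (m : ℝ)).smul (hderiv' q z)).congr_fderiv ?_
    ext v w
    simp [sub_sub, mul_assoc]

end ParametricIntegral

section SecondMoments

theorem memLp_id_restrict_of_isCompact {E : Type*} [NormedAddCommGroup E]
    [SecondCountableTopology E] [MeasurableSpace E] [BorelSpace E] {μ : Measure E}
    [IsFiniteMeasureOnCompacts μ] {S : Set E} (hS : IsCompact S) (p : ENNReal) :
    MemLp id p (μ.restrict S) := by
  have : IsFiniteMeasure (μ.restrict S) := isFiniteMeasure_restrict.2 hS.measure_ne_top
  obtain ⟨C, hC⟩ := hS.exists_bound_of_continuousOn continuousOn_id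
  exact .of_bound aestronglyMeasurable_id C (ae_restrict_of_forall_mem hS.measurableSet hC)

variable {E P : Type*} [NormedAddCommGroup E] [NormedSpace ℝ E] [MeasurableSpace E]
  [BorelSpace E] {μ : Measure E} [IsFiniteMeasureOnCompacts μ] {S : Set E} [NormedAddCommGroup P]
  [NormedSpace ℝ P]

set_option maxSynthPendingDepth 5 in
theorem integrableOn_flip_smulRight_flip (hS : IsCompact S) (L : P →L[ℝ] E →L[ℝ] ℝ) :
    IntegrableOn (fun z => (L.flip z).smulRight (L.flip z)) S μ :=
  ((ContinuousLinearMap.smulRightL ℝ P (P →L[ℝ] ℝ)).continuous₂.comp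
    (L.flip.continuous.prodMk L.flip.continuous)).continuousOn.integrableOn_compact hS

variable [SecondCountableTopology E]

set_option maxSynthPendingDepth 5 in
theorem setIntegral_flip_smulRight_flip (hS : IsCompact S) (L : P →L[ℝ] E →L[ℝ] ℝ) :
    ∫ z in S, (L.flip z).smulRight (L.flip z) ∂μ =
      (uncenteredCovarianceBilinDual (μ.restrict S)).bilinearComp L L := by
  have hint : Integrable (fun z => (L.flip z).smulRight (L.flip z)) (μ.restrict S) :=
    integrableOn_flip_smulRight_flip hS L
  ext v w
  rw [ContinuousLinearMap.integral_apply hint, ContinuousLinearMap.integral_apply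
    (hint.apply_continuousLinearMap v), ContinuousLinearMap.bilinearComp_apply,
    uncenteredCovarianceBilinDual_apply (memLp_id_restrict_of_isCompact hS 2)]
  rfl

set_option maxSynthPendingDepth 5 in
theorem hasSecondFDerivAt_setIntegral_one_add_zpow [CompleteSpace E] [ProperSpace P]
    (hS : IsCompact S) (L : P →L[ℝ] E →L[ℝ] ℝ) {q : P → ℝ} {q' : P →L[ℝ] P →L[ℝ] ℝ}
    (hq : ∀ p, HasFDerivAt q (q' p) p) (hq0 : q 0 = 0) (m : ℤ) :
    HasSecondFDerivAt (fun p => ∫ z in S, (1 + L p z + q p) ^ m ∂μ)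
      ((m : ℝ) • L.flip (∫ z in S, z ∂μ))
      ((m * μ.real S : ℝ) • q' + (m * (m - 1) : ℝ) •
        (uncenteredCovarianceBilinDual (μ.restrict S)).bilinearComp L L) 0 := by
  have hqc : Continuous q := continuous_iff_continuousAt.2 fun p => (hq p).continuousAt
  have hderiv (p : P) (z : E) :
      HasFDerivAt (fun p => 1 + L p z + q p) (L.flip z + q' p) p :=
    ((L.flip z).hasFDerivAt.const_add 1).add (hq p)
  have h := hasSecondFDerivAt_setIntegral_zpow (μ := μ) (p := 0)
    (s := fun p z => 1 + L p z + q p) (s' := fun p z => L.flip z + q' p)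
    (s'' := fun _ _ => q') hS m (by fun_prop) (by fun_prop) continuous_const hderiv
    (fun p z => q'.hasFDerivAt.const_add _) (by simp [hq0])
  have hid : Integrable (fun z => z) (μ.restrict S) := continuousOn_id.integrableOn_compact hS
  simp only [map_zero, zero_apply, hq0, add_zero, one_zpow, mul_one] at h
  convert h using 1
  · rw [integral_smul, L.flip.integral_comp_comm hid]
  · have hconst : Integrable (fun _ => (m : ℝ) • q') (μ.restrict S) :=
      integrableOn_const hS.measure_ne_top
    have hquad : Integrable (fun z => (m * (m - 1) : ℝ) • (L.flip z).smulRight (L.flip z))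
        (μ.restrict S) := (integrableOn_flip_smulRight_flip hS L).fun_smul _
    rw [integral_add hconst hquad, setIntegral_const, integral_smul,
      setIntegral_flip_smulRight_flip hS, smul_smul (μ.real S), mul_comm (μ.real S)]

end SecondMoments

section Moments

variable {n : ℕ} {S : Set (EuclideanSpace ℝ (Fin n))}

theorem measureReal_ne_zero_of_isCompact {X : Type*} [TopologicalSpace X] [MeasurableSpace X]
    {μ : Measure X} [μ.IsOpenPosMeasure] [IsFiniteMeasureOnCompacts μ] {S : Set X}
    (hS : IsCompact S) (hne : (interior S).Nonempty) : μ.real S ≠ 0 :=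
  ENNReal.toReal_ne_zero.2
    ⟨(Measure.measure_pos_of_nonempty_interior μ hne).ne', hS.measure_ne_top⟩

theorem measureReal_smul_bary (hS : volume.real S ≠ 0) :
    volume.real S • bary S = ∫ z in S, z :=
  smul_inv_smul₀ hS _

theorem measureReal_mul_sum_covM (hS : IsCompact S) (hvol : volume.real S ≠ 0)
    (v : EuclideanSpace ℝ (Fin n)) :
    volume.real S * ∑ i, ∑ j, v i * covM S i j * v j = ∫ z in S, ⟪v, z⟫ * ⟪v, z⟫ := by
  have hint (i j : Fin n) : IntegrableOn
      (fun z : EuclideanSpace ℝ (Fin n) => v i * v j * (z i * z j)) S :=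
    ContinuousOn.integrableOn_compact hS (by fun_prop)
  calc volume.real S * ∑ i, ∑ j, v i * covM S i j * v j
      = ∑ i, ∑ j, v i * v j * ∫ z in S, z i * z j := by
        simp only [Finset.mul_sum, covM, Matrix.of_apply, ← measureReal_def]
        refine Finset.sum_congr rfl fun i _ => Finset.sum_congr rfl fun j _ => ?_
        field_simp
    _ = ∫ z in S, ∑ i, ∑ j, v i * v j * (z i * z j) := by
        simp only [integral_finsetSum _ fun i _ => integrable_finsetSum _ fun j _ => hint i j,
          integral_finsetSum _ fun j _ => hint _ j, integral_const_mul]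
    _ = ∫ z in S, ⟪v, z⟫ * ⟪v, z⟫ := by
        simp only [PiLp.inner_apply, Finset.sum_mul_sum]
        refine integral_congr_ae (.of_forall fun z => ?_)
        refine Finset.sum_congr rfl fun i _ => Finset.sum_congr rfl fun j _ => ?_
        simp only [RCLike.inner_apply, conj_trivial]
        ring

theorem exists_hasSecondFDerivAt_FK {K : Set (EuclideanSpace ℝ (Fin n))} (hKcomp : IsCompact K)
    (hKconv : Convex ℝ K) (hK0 : 0 ∈ interior K) :
    ∃ f' f'', HasSecondFDerivAt (𝕜 := ℝ) (FK K) f' f'' 0 ∧ ∀ v η, f'' (v, η) (v, η) =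
      (n + 1) * ((n + 2) * (volume.real K * ∫ y in polarBody K, ⟪v, y⟫ * ⟪v, y⟫) +
        (n + 2) * (volume.real (polarBody K) * ∫ z in K, ⟪η, z⟫ * ⟪η, z⟫) +
        2 * (n + 1) * ⟪v, ∫ y in polarBody K, y⟫ * ⟪η, ∫ z in K, z⟫ -
        2 * (volume.real K * volume.real (polarBody K)) * ⟪v, η⟫) := by
  obtain ⟨ip, hip⟩ : ∃ ip : EuclideanSpace ℝ (Fin n) →L[ℝ] EuclideanSpace ℝ (Fin n) →L[ℝ] ℝ,
      ∀ x y, ip x y = ⟪x, y⟫ := ⟨innerSL ℝ, fun _ _ => rfl⟩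
  have hK' : IsCompact (polarBody K) := isCompact_polarBody hK0
  have hA := hasSecondFDerivAt_setIntegral_one_add_zpow (μ := volume) (q' := 0)
    (P := EuclideanSpace ℝ (Fin n) × EuclideanSpace ℝ (Fin n)) hKcomp
    (ip ∘L .snd ℝ _ _) (hasFDerivAt_const 0) rfl (-(n + 1))
  have hB := hasSecondFDerivAt_setIntegral_one_add_zpow (μ := volume)
    (P := EuclideanSpace ℝ (Fin n) × EuclideanSpace ℝ (Fin n)) hK' (ip ∘L .fst ℝ _ _)
    ip.isBoundedBilinearMap.hasFDerivAt (by simp) (-(n + 1))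
  refine ⟨_, _, (hA.mul hB).congr_of_eventuallyEq ?_, fun v η => ?_⟩
  · simpa [hip] using FK_eventuallyEq_mul_setIntegral hKcomp hKconv hK0
  · have hmoment {S : Set (EuclideanSpace ℝ (Fin n))} (hS : IsCompact S)
        (v : EuclideanSpace ℝ (Fin n)) :
        uncenteredCovarianceBilinDual (volume.restrict S) (ip v) (ip v) =
          ∫ z in S, ⟪v, z⟫ * ⟪v, z⟫ := by
      simp only [uncenteredCovarianceBilinDual_apply (memLp_id_restrict_of_isCompact hS 2), hip]
    simp only [_root_.add_apply, _root_.smul_apply, _root_.zero_apply, smul_eq_mul, smul_zero,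
      map_zero, Prod.fst_zero, Prod.snd_zero, add_zero, zero_add, mul_one, one_zpow,
      setIntegral_const, ContinuousLinearMap.smulRight_apply, ContinuousLinearMap.flip_apply,
      ContinuousLinearMap.bilinearComp_apply, ContinuousLinearMap.comp_apply,
      ContinuousLinearMap.coe_fst', ContinuousLinearMap.coe_snd', ContinuousLinearMap.coe_deriv₂,
      IsBoundedBilinearMap.toContinuousLinearMap_apply, hip, hmoment hK', hmoment hKcomp]
    push_cast
    ring

end Moments

theorem stmt3_general {n : ℕ} (K : Set (EuclideanSpace ℝ (Fin n)))
    (hKcomp : IsCompact K) (hKconv : Convex ℝ K)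
    (hK0 : (0 : EuclideanSpace ℝ (Fin n)) ∈ interior K) :
    ∃ f' : EuclideanSpace ℝ (Fin n) × EuclideanSpace ℝ (Fin n) →
        (EuclideanSpace ℝ (Fin n) × EuclideanSpace ℝ (Fin n) →L[ℝ] ℝ),
      (∀ᶠ p in nhds ((0, 0) : EuclideanSpace ℝ (Fin n) × EuclideanSpace ℝ (Fin n)),
        HasFDerivAt (FK K) (f' p) p) ∧
      ∃ f'' : EuclideanSpace ℝ (Fin n) × EuclideanSpace ℝ (Fin n) →L[ℝ]
          (EuclideanSpace ℝ (Fin n) × EuclideanSpace ℝ (Fin n) →L[ℝ] ℝ),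
        HasFDerivAt f' f'' (0, 0) ∧
        ∀ v η : EuclideanSpace ℝ (Fin n),
          f'' (v, η) (v, η) =
            ((n : ℝ) + 1) * vp K *
              (((n : ℝ) + 2) * (∑ i, ∑ j, v i * covM (polarBody K) i j * v j)
                + ((n : ℝ) + 2) * (∑ i, ∑ j, η i * covM K i j * η j)
                + 2 * ((n : ℝ) + 1) * ⟪v, bary (polarBody K)⟫ * ⟪η, bary K⟫
                - 2 * ⟪v, η⟫) := by
  have hvol : volume.real K ≠ 0 := measureReal_ne_zero_of_isCompact hKcomp ⟨0, hK0⟩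
  have hK' : IsCompact (polarBody K) := isCompact_polarBody hK0
  have hvol' : volume.real (polarBody K) ≠ 0 :=
    measureReal_ne_zero_of_isCompact hK' ⟨0, zero_mem_interior_polarBody hKcomp⟩
  obtain ⟨_, f'', ⟨D, hD, hD', -⟩, hf''⟩ := exists_hasSecondFDerivAt_FK hKcomp hKconv hK0
  refine ⟨D, hD, f'', hD', fun v η => ?_⟩
  rw [hf'', ← measureReal_mul_sum_covM hKcomp hvol, ← measureReal_mul_sum_covM hK' hvol',
    ← measureReal_smul_bary hvol, ← measureReal_smul_bary hvol', real_inner_smul_right,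
    real_inner_smul_right, vp, ← measureReal_def, ← measureReal_def]
  ring

theorem stmt3 {n : ℕ} (hn : 1 ≤ n) (K : Set (EuclideanSpace ℝ (Fin n)))
    (hKcomp : IsCompact K) (hKconv : Convex ℝ K)
    (hK0 : (0 : EuclideanSpace ℝ (Fin n)) ∈ interior K)
    (hbK : bary K = 0) (hbKpolar : bary (polarBody K) = 0) :
    ∃ f' : EuclideanSpace ℝ (Fin n) × EuclideanSpace ℝ (Fin n) →
        (EuclideanSpace ℝ (Fin n) × EuclideanSpace ℝ (Fin n) →L[ℝ] ℝ),
      (∀ᶠ p in nhds ((0, 0) : EuclideanSpace ℝ (Fin n) × EuclideanSpace ℝ (Fin n)),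
        HasFDerivAt (FK K) (f' p) p) ∧
      ∃ f'' : EuclideanSpace ℝ (Fin n) × EuclideanSpace ℝ (Fin n) →L[ℝ]
          (EuclideanSpace ℝ (Fin n) × EuclideanSpace ℝ (Fin n) →L[ℝ] ℝ),
        HasFDerivAt f' f'' (0, 0) ∧
        ∀ v η : EuclideanSpace ℝ (Fin n),
          f'' (v, η) (v, η) =
            ((n : ℝ) + 1) * vp K *
              (((n : ℝ) + 2) * (∑ i, ∑ j, v i * covM (polarBody K) i j * v j)
                + ((n : ℝ) + 2) * (∑ i, ∑ j, η i * covM K i j * η j)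
                - 2 * ⟪v, η⟫) := by
  obtain ⟨f', hf', f'', hf'', h⟩ := stmt3_general K hKcomp hKconv hK0
  exact ⟨f', hf', f'', hf'', fun v η => by simpa [hbK, hbKpolar] using h v η⟩
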